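/- For every n ≥ 1 and every binary head tree T with n leaves: the position head(T) has no incoming arc in arcs(T), every position j ≠ head(T) has exactly one incoming arc in arcs(T), and the resulting function bht2dep(T) is a dependency tree on n words whose root is head(T). -/

import Mathlib

/-- Binary head trees (BHTs). -/
inductive BHT : Type where
  | leaf : BHT
  | nodeL (l r : BHT) : BHT
  | nodeR (l r : BHT) : BHT

/-- Number of leaves of a BHT. -/
def BHT.numLeaves : BHT → ℕ
  | .leaf => 1
  | .nodeL l r => l.numLeaves + r.numLeaves
  | .nodeR l r => l.numLeaves + r.numLeaves

/-- Head position of a BHT whose span of leaf positions starts at `i`. -/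
def BHT.headAt : BHT → ℕ → ℕ
  | .leaf, i => i
  | .nodeL l _, i => l.headAt i
  | .nodeR l r, i => r.headAt (i + l.numLeaves)

/-- Head position of a BHT placed over positions `0, …, numLeaves - 1`. -/
def BHT.head (T : BHT) : ℕ := T.headAt 0

/-- Arc set of a BHT whose span of leaf positions starts at `i`. -/
def BHT.arcsAt : BHT → ℕ → Set (ℕ × ℕ)
  | .leaf, _ => ∅
  | .nodeL l r, i =>
      insert (l.headAt i, r.headAt (i + l.numLeaves)) (l.arcsAt i ∪ r.arcsAt (i + l.numLeaves))
  | .nodeR l r, i =>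
      insert (r.headAt (i + l.numLeaves), l.headAt i) (l.arcsAt i ∪ r.arcsAt (i + l.numLeaves))

/-- Arc set of a BHT placed over positions `0, …, numLeaves - 1`. -/
def BHT.arcs (T : BHT) : Set (ℕ × ℕ) := T.arcsAt 0

/-- `S` is a subtree of `T` (placed over positions `0, …, numLeaves - 1`) whose
leaf span starts at absolute position `i`. -/
inductive BHT.SubtreeAt : BHT → ℕ → BHT → Prop
  | refl (T : BHT) : BHT.SubtreeAt T 0 T
  | inlL (l r S : BHT) (i : ℕ) : BHT.SubtreeAt l i S → BHT.SubtreeAt (BHT.nodeL l r) i S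
  | inrL (l r S : BHT) (i : ℕ) :
      BHT.SubtreeAt r i S → BHT.SubtreeAt (BHT.nodeL l r) (l.numLeaves + i) S
  | inlR (l r S : BHT) (i : ℕ) : BHT.SubtreeAt l i S → BHT.SubtreeAt (BHT.nodeR l r) i S
  | inrR (l r S : BHT) (i : ℕ) :
      BHT.SubtreeAt r i S → BHT.SubtreeAt (BHT.nodeR l r) (l.numLeaves + i) S

/-- `bht2dep T j = some i` if `i` is the unique position with `(i, j) ∈ arcs T`,
and `none` if `j` has no incoming arc. -/
noncomputable def bht2dep (n : ℕ) (T : BHT) : Fin n → Option (Fin n) := fun j =>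
  letI := Classical.dec (∃! i : Fin n, ((i : ℕ), (j : ℕ)) ∈ T.arcs)
  if h : ∃! i : Fin n, ((i : ℕ), (j : ℕ)) ∈ T.arcs then some h.choose else none

/-- `head` is a dependency tree on `n` words: exactly one root (position with
`head r = none`), and every position reaches the root by iterating `head`. -/
def IsDepTree {n : ℕ} (head : Fin n → Option (Fin n)) : Prop :=
  ∃ r : Fin n, head r = none ∧ (∀ r' : Fin n, head r' = none → r' = r) ∧
    ∀ j : Fin n, Relation.ReflTransGen (fun a b => head a = some b) j r

/-- A dependency tree is projective if every position's set of descendants is an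
interval of consecutive positions. -/
def Projective {n : ℕ} (head : Fin n → Option (Fin n)) : Prop :=
  ∀ i : Fin n, ∃ a b : Fin n,
    ∀ j : Fin n, Relation.ReflTransGen (fun x y => head x = some y) j i ↔ (a ≤ j ∧ j ≤ b)

/-- The six hexatags: `tL`/`tR` are terminal tags (leaf that is a left/right child);
`leftL`/`leftR` are `⇐L`/`⇐R` (internal left child with head-label L/R);
`rightL`/`rightR` are `⇒L`/`⇒R` (internal right child with head-label L/R). -/
inductive Hexatag : Type where
  | tL | tR | leftL | leftR | rightL | rightR
deriving DecidableEq

/-- A hexatag is terminal if it is `tL` or `tR`. -/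
def Hexatag.isTerminal : Hexatag → Prop
  | .tL => True
  | .tR => True
  | _ => False

/-- In-order linearization; the Boolean records whether the current subtree is a
right child of its parent (the root counts as a left child by convention). -/
def BHT.hexatagsAux : BHT → Bool → List Hexatag
  | .leaf, false => [.tL]
  | .leaf, true => [.tR]
  | .nodeL l r, b =>
      l.hexatagsAux false ++ (if b then Hexatag.rightL else Hexatag.leftL) :: r.hexatagsAux true
  | .nodeR l r, b =>
      l.hexatagsAux false ++ (if b then Hexatag.rightR else Hexatag.leftR) :: r.hexatagsAux true

/-- The hexatag linearization of a BHT. -/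
def BHT.hexatags (T : BHT) : List Hexatag := T.hexatagsAux false

/-- The tags emitted for the leaves of a BHT, in left-to-right order. -/
def BHT.leafTagsAux : BHT → Bool → List Hexatag
  | .leaf, false => [.tL]
  | .leaf, true => [.tR]
  | .nodeL l r, _ => l.leafTagsAux false ++ r.leafTagsAux true
  | .nodeR l r, _ => l.leafTagsAux false ++ r.leafTagsAux true

/-- The tags emitted for the leaves of a BHT in left-to-right order (root
counts as a left child by convention). -/
def BHT.leafTags (T : BHT) : List Hexatag := T.leafTagsAux false

/-- Partial BHTs: binary head trees possibly containing a dummy placeholder. -/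
inductive PBHT : Type where
  | dummy : PBHT
  | leaf : PBHT
  | nodeL (l r : PBHT) : PBHT
  | nodeR (l r : PBHT) : PBHT
deriving DecidableEq

/-- Does a partial BHT contain a dummy? -/
def PBHT.hasDummy : PBHT → Bool
  | .dummy => true
  | .leaf => false
  | .nodeL l r => l.hasDummy || r.hasDummy
  | .nodeR l r => l.hasDummy || r.hasDummy

/-- Substitute `u` for the dummy in a partial BHT. -/
def PBHT.subst : PBHT → PBHT → PBHT
  | .dummy, u => u
  | .leaf, _ => .leaf
  | .nodeL l r, u => .nodeL (l.subst u) (r.subst u)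
  | .nodeR l r, u => .nodeR (l.subst u) (r.subst u)

/-- One step of the left-corner decoder on a stack of partial BHTs. -/
def hexStep : List PBHT → Hexatag → Option (List PBHT)
  | st, .tL => some (.leaf :: st)
  | t :: st, .tR => if t.hasDummy then some (t.subst .leaf :: st) else none
  | t :: st, .leftL => some (.nodeL t .dummy :: st)
  | t :: st, .leftR => some (.nodeR t .dummy :: st)
  | t :: u :: st, .rightL =>
      if u.hasDummy then some (u.subst (.nodeL t .dummy) :: st) else none
  | t :: u :: st, .rightR =>
      if u.hasDummy then some (u.subst (.nodeR t .dummy) :: st) else none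
  | _, _ => none

/-- The left-corner decoder: run the stack operations; succeed iff every
operation is defined and the final stack is a single dummy-free tree. -/
def tags2bht (τ : List Hexatag) : Option PBHT :=
  match τ.foldlM hexStep ([] : List PBHT) with
  | some [t] => if t.hasDummy then none else some t
  | _ => none

/-- Embedding of BHTs into partial BHTs. -/
def BHT.toPBHT : BHT → PBHT
  | .leaf => .leaf
  | .nodeL l r => .nodeL l.toPBHT r.toPBHT
  | .nodeR l r => .nodeR l.toPBHT r.toPBHT

/-- Stack-count increment of a hexatag. -/
def Hexatag.delta : Hexatag → ℤ
  | .tL => 1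
  | .tR => 0
  | .leftL => 0
  | .leftR => 0
  | .rightL => -1
  | .rightR => -1

/-- Running stack count `sₖ` after the first `k` tags of `τ`. -/
def stackCount (τ : List Hexatag) (k : ℕ) : ℤ :=
  ((τ.take k).map Hexatag.delta).sum

/-- Validity of a hexatag list (0-indexed: Lean index `k` is 1-indexed position `k+1`). -/
def ValidTags (τ : List Hexatag) : Prop :=
  (τ.length % 2 = 1 ∧
    ∀ k : ℕ, ∀ t : Hexatag, τ[k]? = some t →
      (k % 2 = 0 → t.isTerminal) ∧ (k % 2 = 1 → ¬ t.isTerminal)) ∧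
  τ[0]? = some Hexatag.tL ∧
  (∀ k : ℕ, ∀ t : Hexatag, τ[k]? = some t →
    (t = Hexatag.rightL ∨ t = Hexatag.rightR) → 2 ≤ stackCount τ k) ∧
  stackCount τ τ.length = 1

theorem BHT.headAt_range (T : BHT) : ∀ i, i ≤ T.headAt i ∧ T.headAt i < i + T.numLeaves := by
  induction T with
  | leaf => intro i; simp [BHT.headAt, BHT.numLeaves]
  | nodeL l r ihl ihr =>
    intro i
    have h1 := ihl i
    simp only [BHT.headAt, BHT.numLeaves]
    omega
  | nodeR l r ihl ihr =>
    intro i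
    have h1 := ihr (i + l.numLeaves)
    simp only [BHT.headAt, BHT.numLeaves]
    omega

theorem BHT.mem_nodeL (l r : BHT) (i a b : ℕ) :
    (a, b) ∈ (BHT.nodeL l r).arcsAt i ↔
      (a = l.headAt i ∧ b = r.headAt (i + l.numLeaves)) ∨ (a, b) ∈ l.arcsAt i ∨
        (a, b) ∈ r.arcsAt (i + l.numLeaves) := by
  simp [BHT.arcsAt]

theorem BHT.mem_nodeR (l r : BHT) (i a b : ℕ) :
    (a, b) ∈ (BHT.nodeR l r).arcsAt i ↔
      (a = r.headAt (i + l.numLeaves) ∧ b = l.headAt i) ∨ (a, b) ∈ l.arcsAt i ∨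
        (a, b) ∈ r.arcsAt (i + l.numLeaves) := by
  simp [BHT.arcsAt]

theorem BHT.arcsAt_range (T : BHT) : ∀ i a b, (a, b) ∈ T.arcsAt i →
    (i ≤ a ∧ a < i + T.numLeaves) ∧ (i ≤ b ∧ b < i + T.numLeaves) := by
  induction T with
  | leaf => intro i a b h; simp [BHT.arcsAt] at h
  | nodeL l r ihl ihr =>
    intro i a b h
    have h1 := l.headAt_range i
    have h2 := r.headAt_range (i + l.numLeaves)
    simp only [BHT.numLeaves]
    rcases (BHT.mem_nodeL ..).1 h with h | h | h
    · omega
    · have := ihl _ _ _ h; omega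
    · have := ihr _ _ _ h; omega
  | nodeR l r ihl ihr =>
    intro i a b h
    have h1 := l.headAt_range i
    have h2 := r.headAt_range (i + l.numLeaves)
    simp only [BHT.numLeaves]
    rcases (BHT.mem_nodeR ..).1 h with h | h | h
    · omega
    · have := ihl _ _ _ h; omega
    · have := ihr _ _ _ h; omega

theorem BHT.head_no_arc (T : BHT) : ∀ i a, (a, T.headAt i) ∉ T.arcsAt i := by
  induction T with
  | leaf => intro i a h; simp [BHT.arcsAt] at h
  | nodeL l r ihl ihr =>
    intro i a h
    have h1 := l.headAt_range i
    have h2 := r.headAt_range (i + l.numLeaves)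
    simp only [BHT.headAt] at h
    rcases (BHT.mem_nodeL ..).1 h with h | h | h
    · omega
    · exact ihl _ _ h
    · have := r.arcsAt_range _ _ _ h; omega
  | nodeR l r ihl ihr =>
    intro i a h
    have h1 := l.headAt_range i
    have h2 := r.headAt_range (i + l.numLeaves)
    simp only [BHT.headAt] at h
    rcases (BHT.mem_nodeR ..).1 h with h | h | h
    · omega
    · have := l.arcsAt_range _ _ _ h; omega
    · exact ihr _ _ h

theorem BHT.arc_unique (T : BHT) : ∀ i a a' b, (a, b) ∈ T.arcsAt i → (a', b) ∈ T.arcsAt i →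
    a = a' := by
  induction T with
  | leaf => intro i a a' b h; simp [BHT.arcsAt] at h
  | nodeL l r ihl ihr =>
    intro i a a' b h h'
    have h1 := l.headAt_range i
    have h2 := r.headAt_range (i + l.numLeaves)
    have n2 := r.head_no_arc (i + l.numLeaves)
    have r1 := l.arcsAt_range i
    have r2 := r.arcsAt_range (i + l.numLeaves)
    rcases (BHT.mem_nodeL ..).1 h with h | h | h <;>
      rcases (BHT.mem_nodeL ..).1 h' with h' | h' | h' <;> grind
  | nodeR l r ihl ihr =>
    intro i a a' b h h'
    have h1 := l.headAt_range i
    have h2 := r.headAt_range (i + l.numLeaves)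
    have n2 := l.head_no_arc i
    have r1 := l.arcsAt_range i
    have r2 := r.arcsAt_range (i + l.numLeaves)
    rcases (BHT.mem_nodeR ..).1 h with h | h | h <;>
      rcases (BHT.mem_nodeR ..).1 h' with h' | h' | h' <;> grind

theorem reflTransGen_weaken {r p : ℕ → ℕ → Prop} {a b : ℕ} (h : Relation.ReflTransGen r a b)
    (hrp : ∀ x y, r x y → p x y) : Relation.ReflTransGen p a b := by
  induction h with
  | refl => exact .refl
  | tail _ hbc ih => exact ih.tail (hrp _ _ hbc)

theorem BHT.reach (T : BHT) : ∀ i j, i ≤ j → j < i + T.numLeaves →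
    Relation.ReflTransGen (fun a b => (b, a) ∈ T.arcsAt i) j (T.headAt i) := by
  induction T with
  | leaf =>
    intro i j h1 h2
    simp only [BHT.numLeaves] at h2
    obtain rfl : j = i := by omega
    exact .refl
  | nodeL l r ihl ihr =>
    intro i j h1 h2
    simp only [BHT.numLeaves] at h2
    by_cases hj : j < i + l.numLeaves
    · exact reflTransGen_weaken (ihl i j h1 hj) (fun a b h => (BHT.mem_nodeL ..).2 (.inr (.inl h)))
    · refine Relation.ReflTransGen.tail
        (reflTransGen_weaken (ihr (i + l.numLeaves) j (by omega) (by omega))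
          (fun a b h => (BHT.mem_nodeL ..).2 (.inr (.inr h)))) ?_
      exact (BHT.mem_nodeL ..).2 (.inl ⟨rfl, rfl⟩)
  | nodeR l r ihl ihr =>
    intro i j h1 h2
    simp only [BHT.numLeaves] at h2
    by_cases hj : j < i + l.numLeaves
    · refine Relation.ReflTransGen.tail (reflTransGen_weaken (ihl i j h1 hj)
          (fun a b h => (BHT.mem_nodeR ..).2 (.inr (.inl h)))) ?_
      exact (BHT.mem_nodeR ..).2 (.inl ⟨rfl, rfl⟩)
    · exact reflTransGen_weaken (ihr (i + l.numLeaves) j (by omega) (by omega))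
          (fun a b h => (BHT.mem_nodeR ..).2 (.inr (.inr h)))

theorem bht2dep_eq_some {n : ℕ} {T : BHT} {i j : Fin n} (h : ((i : ℕ), (j : ℕ)) ∈ T.arcs) :
    bht2dep n T j = some i := by
  have hu : ∃! i : Fin n, ((i : ℕ), (j : ℕ)) ∈ T.arcs :=
    ⟨i, h, fun k hk => Fin.ext (T.arc_unique 0 _ _ _ hk h)⟩
  unfold bht2dep
  rw [dif_pos hu]
  exact congrArg some (Fin.ext (T.arc_unique 0 _ _ _ hu.choose_spec.1 h))

theorem bht2dep_isDepTree (n : ℕ) (hn : 1 ≤ n) (T : BHT) (hT : T.numLeaves = n) :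
    ∃ r : Fin n, (r : ℕ) = T.head ∧
      (∀ i : ℕ, (i, (r : ℕ)) ∉ T.arcs) ∧
      (∀ j : Fin n, j ≠ r → ∃! i : ℕ, (i, (j : ℕ)) ∈ T.arcs) ∧
      IsDepTree (bht2dep n T) ∧ bht2dep n T r = none := by
  have hlt : T.head < n := by
    have := (T.headAt_range 0).2
    simp only [BHT.head]; omega
  have hno : ∀ i : ℕ, (i, T.head) ∉ T.arcs := T.head_no_arc 0
  have hreach : ∀ j : Fin n,
      Relation.ReflTransGen (fun a b => (b, a) ∈ T.arcs) (j : ℕ) T.head :=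
    fun j => T.reach 0 j (Nat.zero_le _) (by omega)
  have hex : ∀ j : Fin n, j ≠ ⟨T.head, hlt⟩ → ∃ i : Fin n, ((i : ℕ), (j : ℕ)) ∈ T.arcs := by
    intro j hj
    rcases (hreach j).cases_head with h | ⟨c, hc, _⟩
    · exact absurd (Fin.ext h) hj
    · have := (T.arcsAt_range 0 _ _ hc).1.2
      exact ⟨⟨c, by omega⟩, hc⟩
  have hroot : bht2dep n T ⟨T.head, hlt⟩ = none := by
    unfold bht2dep
    rw [dif_neg]
    rintro ⟨i, hi, _⟩
    exact hno _ hi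
  refine ⟨⟨T.head, hlt⟩, rfl, hno, ?_, ⟨⟨T.head, hlt⟩, hroot, ?_, ?_⟩, hroot⟩
  · intro j hj
    obtain ⟨i, hi⟩ := hex j hj
    exact ⟨i, hi, fun k hk => T.arc_unique 0 _ _ _ hk hi⟩
  · intro j hj
    by_contra hne
    obtain ⟨i, hi⟩ := hex j hne
    rw [bht2dep_eq_some hi] at hj
    cases hj
  · have key : ∀ a : ℕ, Relation.ReflTransGen (fun a b => (b, a) ∈ T.arcs) a T.head →
        ∀ ha : a < n, Relation.ReflTransGen (fun a b => bht2dep n T a = some b)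
          (⟨a, ha⟩ : Fin n) ⟨T.head, hlt⟩ := by
      intro a h
      induction h using Relation.ReflTransGen.head_induction_on with
      | refl => intro _; exact .refl
      | head hac _ ih =>
        intro ha
        have := (T.arcsAt_range 0 _ _ hac).1.2
        exact .head (bht2dep_eq_some (i := ⟨_, by omega⟩) hac) (ih (by omega))
    exact fun j => key j (hreach j) j.2
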